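/- arXiv:1807.03650 — 2 statements merged into one kernel-verified Lean document; each statement's English description precedes it below -/
import Mathlib

section
/- Consider a sequence of M-layer models with non-identical layers on a fixed finite simple graph G = (V,E): for each M, the families {Y_{m,ℓ}} and {Z_{m,i}} are mutually independent Bernoulli with P[Y_{m,ℓ}=1] = p_{m,ℓ}(M) and P[Z_{m,i}=1] = q_{m,i}(M), W_{m,ℓ} = Y_{m,ℓ} Z_{m,i} Z_{m,j} for ℓ = (i,j), W_ℓ = Σ_{m=1}^M W_{m,ℓ}, and r_{m,ℓ} = p_{m,ℓ} q_{m,i} q_{m,j}. Assume that as M → ∞: (i) max_{1≤m≤M} r_{m,ℓ} → 0 for each ℓ ∈ E; (ii) Σ_{m=1}^M r_{m,ℓ} → λ_ℓ ∈ (0,∞) for each ℓ ∈ E; and (iii) for every pair of distinct links ℓ, ℓ' that share an endpoint, R_{ℓ,ℓ'} := Σ_{m=1}^M E[W_{m,ℓ} W_{m,ℓ'}] → 0. Then for every (w_ℓ)_{ℓ∈E} ∈ ℕ^E, lim_{M→∞} P[W_ℓ = w_ℓ for all ℓ ∈ E] = ∏_{ℓ∈E} λ_ℓ^{w_ℓ}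 e^{−λ_ℓ} / w_ℓ!. -/
open MeasureTheory Filter Finset

open scoped Classical

/-- Bernoulli measure on `Bool` with success probability `p`. -/
noncomputable def bern (p : ℝ) : Measure Bool :=
  ENNReal.ofReal p • Measure.dirac true + ENNReal.ofReal (1 - p) • Measure.dirac false

/-- The `M`-layer model with non-identical layers: the thinning and activation
probabilities `p m ℓ`, `q m i` may depend on the layer `m`. -/
noncomputable def netμ' (V : Type) [Fintype V] (M : ℕ)
    (p : ℕ → (V × V) → ℝ) (q : ℕ → V → ℝ) :
    Measure (((Fin M × (V × V)) ⊕ (Fin M × V)) → Bool) :=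
  Measure.pi fun k =>
    bern (Sum.elim (fun a : Fin M × (V × V) => p a.1.val a.2)
      (fun a : Fin M × V => q a.1.val a.2) k)

/-- Link `ℓ = (i,j)` exists on layer `m`: `W_{m,ℓ} = Y_{m,ℓ} Z_{m,i} Z_{m,j} = 1`. -/
def exOn {V : Type} {M : ℕ} (m : Fin M) (ℓ : V × V)
    (ω : ((Fin M × (V × V)) ⊕ (Fin M × V)) → Bool) : Prop :=
  ω (Sum.inl (m, ℓ)) = true ∧ ω (Sum.inr (m, ℓ.1)) = true ∧ ω (Sum.inr (m, ℓ.2)) = true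

/-- `W_{m,ℓ}` as a real-valued (0/1) random variable. -/
noncomputable def Wlay {V : Type} {M : ℕ} (m : Fin M) (ℓ : V × V)
    (ω : ((Fin M × (V × V)) ⊕ (Fin M × V)) → Bool) : ℝ :=
  if exOn m ℓ ω then 1 else 0

/-- `W_ℓ = Σ_m W_{m,ℓ}`: the number of layers on which link `ℓ` exists. -/
noncomputable def Wnum {V : Type} {M : ℕ} (ℓ : V × V)
    (ω : ((Fin M × (V × V)) ⊕ (Fin M × V)) → Bool) : ℕ :=
  (Finset.univ.filter fun m : Fin M => exOn m ℓ ω).card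

/-- Two links share an endpoint. -/
def shares {V : Type} (ℓ ℓ' : V × V) : Prop :=
  ℓ.1 = ℓ'.1 ∨ ℓ.1 = ℓ'.2 ∨ ℓ.2 = ℓ'.1 ∨ ℓ.2 = ℓ'.2

/-!
The argument is a multivariate version of Le Cam's inequality. For a family of events of
probabilities `r ℓ`, the law of the indicator vector and the product of the Poisson laws of rates
`r ℓ` both give mass at least `1 - ∑ r` to the zero vector and, up to the probability of two events
occurring together, at least `r ℓ * (1 - ∑ r)` to the `ℓ`-th unit vector. They therefore differ in
total variation by at most a quantity of second order. Under convolution such errors add up and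
products of Poisson laws stay products of Poisson laws, so the law of a sum of independent layers is
Poisson up to the sum of the errors of the layers. The squares `∑ₘ r²` vanish because the maximum of
`r` does while its sum converges, and so do the joint occurrences of two links without a common
endpoint, which are independent; the other joint occurrences vanish by assumption.
-/

open ProbabilityTheory

open scoped NNReal Topology

section TotalVariation

variable {α ι : Type*} [MeasurableSpace α] {P P' Q Q' : Measure α} {ε δ : ℝ}

/-- The total variation distance between `P` and `Q` is at most `ε`, phrased as a uniform bound
over measurable sets. -/
def TVClose (P Q : Measure α) (ε : ℝ) : Prop :=
  ∀ S, MeasurableSet S → |P.real S - Q.real S| ≤ ε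

lemma TVClose.trans {R : Measure α} (h : TVClose P Q ε) (h' : TVClose Q R δ) :
    TVClose P R (ε + δ) := fun S hS =>
  (abs_sub_le _ _ _).trans (add_le_add (h S hS) (h' S hS))

lemma sum_le_measureReal_of_le_singleton [Fintype ι] [MeasurableSingletonClass α]
    [IsFiniteMeasure P] {x : ι → α} (hx : Function.Injective x) {c : ι → ℝ}
    (hP : ∀ i, c i ≤ P.real {x i}) (S : Set α) [DecidablePred (x · ∈ S)] :
    ∑ i with x i ∈ S, c i ≤ P.real S := by
  calc ∑ i with x i ∈ S, c i ≤ ∑ i with x i ∈ S, P.real {x i} := sum_le_sum fun i _ => hP i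
    _ = P.real ((univ.filter fun i => x i ∈ S).map ⟨x, hx⟩ : Finset α) := by
      rw [← sum_measureReal_singleton, sum_map]; rfl
    _ ≤ P.real S := measureReal_mono fun y hy => by
      simp only [coe_map, coe_filter, mem_univ, true_and] at hy
      obtain ⟨i, hi, rfl⟩ := hy
      exact hi

lemma TVClose.of_le_singleton [Fintype ι] [MeasurableSingletonClass α] [IsProbabilityMeasure P]
    [IsProbabilityMeasure Q] {x : ι → α} (hx : Function.Injective x) {c : ι → ℝ}
    (hP : ∀ i, c i ≤ P.real {x i}) (hQ : ∀ i, c i ≤ Q.real {x i}) :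
    TVClose P Q (1 - ∑ i, c i) := by
  intro S hS
  have hsplit : ∑ i, c i = ∑ i with x i ∈ S, c i + ∑ i with x i ∈ Sᶜ, c i := by
    convert (sum_filter_add_sum_filter_not univ (x · ∈ S) c).symm
  have hPS := sum_le_measureReal_of_le_singleton hx hP S
  have hQS := sum_le_measureReal_of_le_singleton hx hQ S
  have hPSc := sum_le_measureReal_of_le_singleton hx hP Sᶜ
  have hQSc := sum_le_measureReal_of_le_singleton hx hQ Sᶜ
  rw [probReal_compl_eq_one_sub hS] at hPSc hQSc
  exact abs_sub_le_iff.2 ⟨by linarith, by linarith⟩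

lemma conv_real_apply [AddMonoid α] [MeasurableAdd₂ α] [IsFiniteMeasure P] [IsFiniteMeasure Q]
    {S : Set α} (hS : MeasurableSet S) :
    (P ∗ Q).real S = ∫ x, Q.real ((x + ·) ⁻¹' S) ∂P := by
  rw [← integral_indicator_one hS, integral_conv ((integrable_const 1).indicator hS)]
  refine integral_congr_ae (ae_of_all _ fun x => ?_)
  exact integral_indicator_one (hS.preimage (measurable_const_add x))

lemma TVClose.conv_left [AddMonoid α] [MeasurableAdd₂ α] [IsProbabilityMeasure P]
    [IsProbabilityMeasure Q] (h : TVClose P Q ε) (R : Measure α) [IsProbabilityMeasure R] :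
    TVClose (R ∗ P) (R ∗ Q) ε := by
  intro S hS
  have hint (T : Measure α) [IsProbabilityMeasure T] :
      Integrable (fun x => T.real ((x + ·) ⁻¹' S)) R :=
    .of_bound (measurable_measure_prodMk_left (hS.preimage measurable_add)
      |>.ennreal_toReal.aestronglyMeasurable) 1 (ae_of_all _ fun x => by
        rw [Real.norm_of_nonneg measureReal_nonneg]; exact measureReal_le_one)
  rw [conv_real_apply hS, conv_real_apply hS, ← integral_sub (hint P) (hint Q)]
  have hbound (x : α) : ‖P.real ((x + ·) ⁻¹' S) - Q.real ((x + ·) ⁻¹' S)‖ ≤ ε :=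
    h _ (hS.preimage (measurable_const_add x))
  simpa using norm_integral_le_of_norm_le_const (μ := R) (ae_of_all _ hbound)

lemma TVClose.conv [AddCommMonoid α] [MeasurableAdd₂ α] [IsProbabilityMeasure P]
    [IsProbabilityMeasure Q] [IsProbabilityMeasure P'] [IsProbabilityMeasure Q'] (h : TVClose P Q ε)
    (h' : TVClose P' Q' δ) : TVClose (P ∗ P') (Q ∗ Q') (ε + δ) := by
  have hleft : TVClose (P ∗ P') (Q ∗ P') ε := by
    simpa only [Measure.conv_comm _ P'] using h.conv_left P'
  exact hleft.trans (h'.conv_left Q)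

end TotalVariation

section Poisson

variable {L : Type*} [Fintype L]

lemma pi_conv_pi {β : Type*} [MeasurableSpace β] [AddMonoid β] [MeasurableAdd₂ β]
    (P Q : L → Measure β) [∀ ℓ, IsFiniteMeasure (P ℓ)] [∀ ℓ, IsFiniteMeasure (Q ℓ)] :
    Measure.pi P ∗ Measure.pi Q = Measure.pi fun ℓ => P ℓ ∗ Q ℓ := by
  simp only [Measure.conv]
  rw [← (measurePreserving_arrowProdEquivProdArrow β β L P Q).map_eq,
    Measure.map_map (by fun_prop) (by fun_prop), ← Measure.pi_map_pi (by fun_prop)]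
  rfl

/-- The joint law of independent Poisson variables with rates `r ℓ`. -/
noncomputable def poissonPi (r : L → ℝ≥0) : Measure (L → ℕ) :=
  Measure.pi fun ℓ => poissonMeasure (r ℓ)

instance (r : L → ℝ≥0) : IsProbabilityMeasure (poissonPi r) := by
  unfold poissonPi; infer_instance

lemma poissonPi_conv_poissonPi (r s : L → ℝ≥0) :
    poissonPi r ∗ poissonPi s = poissonPi (r + s) := by
  simp only [poissonPi, pi_conv_pi, poissonMeasure_conv_poissonMeasure, Pi.add_apply]

lemma poissonPi_real_singleton (r : L → ℝ≥0) (w : L → ℕ) :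
    (poissonPi r).real {w} =
      ∏ ℓ, (r ℓ : ℝ) ^ w ℓ * Real.exp (-r ℓ) / ((w ℓ).factorial : ℝ) := by
  rw [poissonPi, ← Set.univ_pi_singleton w, measureReal_def, Measure.pi_pi, ENNReal.toReal_prod]
  refine prod_congr rfl fun ℓ _ => ?_
  rw [← measureReal_def, poissonMeasure_real_singleton, mul_comm (Real.exp _)]

lemma one_sub_sum_le_poissonPi_real_zero (r : L → ℝ≥0) :
    1 - ∑ ℓ, (r ℓ : ℝ) ≤ (poissonPi r).real {0} := by
  have hzero : (poissonPi r).real {0} = Real.exp (-∑ ℓ, (r ℓ : ℝ)) := by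
    simp [poissonPi_real_singleton, ← Real.exp_sum]
  exact hzero ▸ Real.one_sub_le_exp_neg _

lemma mul_one_sub_sum_le_poissonPi_real_single (r : L → ℝ≥0) (ℓ : L) :
    r ℓ * (1 - ∑ ℓ', (r ℓ' : ℝ)) ≤ (poissonPi r).real {Pi.single ℓ 1} := by
  have hsingle : (poissonPi r).real {Pi.single ℓ 1} = r ℓ * Real.exp (-∑ ℓ', (r ℓ' : ℝ)) := by
    have hfactor (ℓ' : L) : (r ℓ' : ℝ) ^ Pi.single (M := fun _ => ℕ) ℓ 1 ℓ' *
        Real.exp (-r ℓ') / ((Pi.single (M := fun _ => ℕ) ℓ 1 ℓ').factorial : ℝ) =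
          (if ℓ' = ℓ then (r ℓ : ℝ) else 1) * Real.exp (-r ℓ') := by
      rcases eq_or_ne ℓ' ℓ with rfl | h <;> simp [*]
    simp_rw [poissonPi_real_singleton, hfactor]
    rw [prod_mul_distrib, ← Real.exp_sum, sum_neg_distrib]
    simp
  rw [hsingle]
  gcongr
  exact Real.one_sub_le_exp_neg _

lemma tendsto_poissonPi_real_singleton {α : Type*} {f : Filter α} {r : α → L → ℝ≥0}
    {lam : L → ℝ} (hr : ∀ ℓ, Tendsto (fun a => (r a ℓ : ℝ)) f (𝓝 (lam ℓ))) (w : L → ℕ) :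
    Tendsto (fun a => (poissonPi (r a)).real {w}) f
      (𝓝 (∏ ℓ, lam ℓ ^ w ℓ * Real.exp (-lam ℓ) / ((w ℓ).factorial : ℝ))) := by
  simp only [poissonPi_real_singleton]
  exact tendsto_finsetProd _ fun ℓ _ =>
    (((hr ℓ).pow _).mul (Real.continuous_exp.tendsto _ |>.comp (hr ℓ).neg)).div_const _

end Poisson

section Events

variable {Ω L : Type*}

/-- The random vector recording which of the events `A ℓ` occur, with `1` for an event that
occurs and `0` for one that does not. -/
noncomputable def occurrences (A : L → Set Ω) (ω : Ω) (ℓ : L) : ℕ := (A ℓ).indicator 1 ω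

lemma occurrences_eq_zero_iff {A : L → Set Ω} {ω : Ω} :
    occurrences A ω = 0 ↔ ∀ ℓ, ω ∉ A ℓ := by
  simp [funext_iff, occurrences]

lemma occurrences_eq_single_iff {A : L → Set Ω} {ω : Ω} {ℓ : L} :
    occurrences A ω = Pi.single ℓ 1 ↔ ω ∈ A ℓ ∧ ∀ ℓ' ≠ ℓ, ω ∉ A ℓ' := by
  rw [funext_iff]
  refine ⟨fun h => ⟨?_, fun ℓ' h' => ?_⟩, fun h ℓ' => ?_⟩
  · simpa [occurrences, Set.indicator_apply] using h ℓ
  · simpa [occurrences, h'] using h ℓ'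
  · rcases eq_or_ne ℓ' ℓ with rfl | h' <;> simp [occurrences, *]

variable [MeasurableSpace Ω] {μ : Measure Ω}

lemma measurable_occurrences {A : L → Set Ω} (hA : ∀ ℓ, MeasurableSet (A ℓ)) :
    Measurable (occurrences A) :=
  measurable_pi_lambda _ fun ℓ => measurable_one.indicator (hA ℓ)

variable [Fintype L]

lemma one_sub_sum_le_map_occurrences_real_zero [IsProbabilityMeasure μ] {A : L → Set Ω}
    (hA : ∀ ℓ, MeasurableSet (A ℓ)) :
    1 - ∑ ℓ, μ.real (A ℓ) ≤ (μ.map (occurrences A)).real {0} := by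
  have hset : occurrences A ⁻¹' {0} = (⋃ ℓ, A ℓ)ᶜ := by
    ext ω; simp [occurrences_eq_zero_iff]
  rw [map_measureReal_apply (measurable_occurrences hA) (measurableSet_singleton _), hset,
    probReal_compl_eq_one_sub (.iUnion hA)]
  gcongr
  exact measureReal_iUnion_fintype_le A

lemma sub_sum_inter_le_map_occurrences_real_single [IsFiniteMeasure μ] {A : L → Set Ω}
    (hA : ∀ ℓ, MeasurableSet (A ℓ)) (ℓ : L) :
    μ.real (A ℓ) - ∑ ℓ' ∈ univ.erase ℓ, μ.real (A ℓ ∩ A ℓ') ≤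
      (μ.map (occurrences A)).real {Pi.single ℓ 1} := by
  have hset : occurrences A ⁻¹' {Pi.single ℓ 1} = A ℓ \ ⋃ ℓ' ∈ univ.erase ℓ, A ℓ ∩ A ℓ' := by
    ext ω
    simp +contextual [occurrences_eq_single_iff]
  rw [map_measureReal_apply (measurable_occurrences hA) (measurableSet_singleton _), hset]
  calc μ.real (A ℓ) - ∑ ℓ' ∈ univ.erase ℓ, μ.real (A ℓ ∩ A ℓ')
      ≤ μ.real (A ℓ) - μ.real (⋃ ℓ' ∈ univ.erase ℓ, A ℓ ∩ A ℓ') := by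
        gcongr; exact measureReal_biUnion_finset_le _ _
    _ ≤ μ.real (A ℓ \ ⋃ ℓ' ∈ univ.erase ℓ, A ℓ ∩ A ℓ') :=
        le_measureReal_sdiff (h := measure_ne_top _ _)

/-- The second-order error in the Poisson approximation of `occurrences A`: the squared expected
number of events plus the expected number of ordered pairs of distinct events that both occur. -/
noncomputable def poissonError (μ : Measure Ω) (A : L → Set Ω) : ℝ :=
  (∑ ℓ, μ.real (A ℓ)) ^ 2 + ∑ ℓ, ∑ ℓ' ∈ univ.erase ℓ, μ.real (A ℓ ∩ A ℓ')

lemma tvClose_map_occurrences_poissonPi [IsProbabilityMeasure μ] {A : L → Set Ω}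
    (hA : ∀ ℓ, MeasurableSet (A ℓ)) :
    TVClose (μ.map (occurrences A)) (poissonPi fun ℓ => (μ (A ℓ)).toNNReal)
      (poissonError μ A) := by
  have := Measure.isProbabilityMeasure_map (μ := μ) (measurable_occurrences hA).aemeasurable
  set pairs := fun ℓ => ∑ ℓ' ∈ univ.erase ℓ, μ.real (A ℓ ∩ A ℓ')
  have hpairs (ℓ : L) : 0 ≤ pairs ℓ := sum_nonneg fun _ _ => measureReal_nonneg
  have hsum : 0 ≤ ∑ ℓ, μ.real (A ℓ) := sum_nonneg fun _ _ => measureReal_nonneg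
  let x : Option L → L → ℕ := fun o => o.elim 0 fun ℓ => Pi.single ℓ 1
  let c : Option L → ℝ := fun o => o.elim (1 - ∑ ℓ, μ.real (A ℓ)) fun ℓ =>
    μ.real (A ℓ) * (1 - ∑ ℓ', μ.real (A ℓ')) - pairs ℓ
  have hx : Function.Injective x := by
    rintro (_ | ℓ) (_ | ℓ') h
    · rfl
    · simpa [x] using congrFun h ℓ'
    · simpa [x] using congrFun h ℓ
    · simpa [x, Pi.single_apply] using congrFun h ℓ
  have hc : 1 - ∑ o, c o = poissonError μ A := by
    simp only [c, Fintype.sum_option, Option.elim, poissonError, sum_sub_distrib, ← sum_mul, pairs]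
    ring
  rw [← hc]
  refine .of_le_singleton hx (fun o => ?_) fun o => ?_
  · rcases o with _ | ℓ
    · exact one_sub_sum_le_map_occurrences_real_zero hA
    · refine le_trans ?_ (sub_sum_inter_le_map_occurrences_real_single hA ℓ)
      exact sub_le_sub_right (mul_le_of_le_one_right measureReal_nonneg (by linarith)) _
  · rcases o with _ | ℓ
    · exact one_sub_sum_le_poissonPi_real_zero _
    · exact (sub_le_self _ (hpairs ℓ)).trans
        (mul_one_sub_sum_le_poissonPi_real_single (fun ℓ => (μ (A ℓ)).toNNReal) ℓ)

lemma tvClose_map_sum_occurrences_poissonPi {κ : Type*} {A : κ → L → Set Ω}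
    (hA : ∀ m ℓ, MeasurableSet (A m ℓ)) (hind : iIndepFun (fun m => occurrences (A m)) μ)
    (s : Finset κ) :
    TVClose (μ.map (∑ m ∈ s, occurrences (A m)))
      (poissonPi (∑ m ∈ s, fun ℓ => (μ (A m ℓ)).toNNReal)) (∑ m ∈ s, poissonError μ (A m)) := by
  have := hind.isProbabilityMeasure
  have hmeas (m : κ) : Measurable (occurrences (A m)) := measurable_occurrences (hA m)
  induction s using Finset.induction_on with
  | empty =>
    have h := tvClose_map_occurrences_poissonPi (μ := μ) (A := fun _ : L => ∅) fun _ => .empty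
    have h0 : occurrences (fun _ : L => (∅ : Set Ω)) = 0 := by
      ext; simp [occurrences]
    simpa [h0, poissonError, Pi.zero_def] using h
  | insert m s hm ih =>
    have hs : Measurable (∑ m ∈ s, occurrences (A m)) := by fun_prop
    have := Measure.isProbabilityMeasure_map (μ := μ) (hmeas m).aemeasurable
    have := Measure.isProbabilityMeasure_map (μ := μ) hs.aemeasurable
    have hindep : occurrences (A m) ⟂ᵢ[μ] ∑ m ∈ s, occurrences (A m) :=
      (hind.indepFun_finsetSum_of_notMem hmeas hm).symm
    rw [sum_insert hm, sum_insert hm, sum_insert hm, hindep.map_add_eq_map_conv_map (hmeas m) hs,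
      ← poissonPi_conv_poissonPi]
    exact (tvClose_map_occurrences_poissonPi (hA m)).conv ih

lemma tendsto_poissonError {α L : Type*} [Fintype L] {f : Filter α} {Ω κ : α → Type*}
    [∀ a, Fintype (κ a)] [∀ a, MeasurableSpace (Ω a)] {μ : ∀ a, Measure (Ω a)}
    {A : ∀ a, κ a → L → Set (Ω a)}
    (hsq : ∀ ℓ, Tendsto (fun a => ∑ m, (μ a).real (A a m ℓ) ^ 2) f (𝓝 0))
    (hpair : ∀ ℓ ℓ', ℓ ≠ ℓ' →
      Tendsto (fun a => ∑ m, (μ a).real (A a m ℓ ∩ A a m ℓ')) f (𝓝 0)) :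
    Tendsto (fun a => ∑ m, poissonError (μ a) (A a m)) f (𝓝 0) := by
  have hsq' : Tendsto (fun a => ∑ m, (∑ ℓ, (μ a).real (A a m ℓ)) ^ 2) f (𝓝 0) := by
    refine squeeze_zero (fun a => sum_nonneg fun m _ => sq_nonneg _)
      (g := fun a => Fintype.card L * ∑ ℓ, ∑ m, (μ a).real (A a m ℓ) ^ 2) (fun a => ?_) ?_
    · rw [sum_comm, mul_sum]
      exact sum_le_sum fun m _ => sq_sum_le_card_mul_sum_sq
    · simpa using (tendsto_finsetSum univ fun ℓ _ => hsq ℓ).const_mul (Fintype.card L : ℝ)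
  have hpair' : Tendsto
      (fun a => ∑ ℓ, ∑ ℓ' ∈ univ.erase ℓ, ∑ m, (μ a).real (A a m ℓ ∩ A a m ℓ')) f (𝓝 0) := by
    simpa using tendsto_finsetSum univ fun ℓ _ => tendsto_finsetSum (univ.erase ℓ) fun ℓ' hℓ' =>
      hpair ℓ ℓ' (ne_of_mem_erase hℓ').symm
  have hadd := hsq'.add hpair'
  rw [add_zero] at hadd
  refine hadd.congr fun a => ?_
  simp only [poissonError, sum_add_distrib]
  congr 1
  rw [sum_comm]
  simp only [sum_comm (s := univ (α := κ a))]

theorem tendsto_measureReal_sum_occurrences_eq {α L : Type*} [Fintype L] {f : Filter α}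
    {Ω κ : α → Type*} [∀ a, Fintype (κ a)] [∀ a, MeasurableSpace (Ω a)]
    {μ : ∀ a, Measure (Ω a)} {A : ∀ a, κ a → L → Set (Ω a)}
    (hA : ∀ a m ℓ, MeasurableSet (A a m ℓ))
    (hind : ∀ a, iIndepFun (fun m => occurrences (A a m)) (μ a)) {lam : L → ℝ}
    (hmean : ∀ ℓ, Tendsto (fun a => ∑ m, (μ a).real (A a m ℓ)) f (𝓝 (lam ℓ)))
    (hsq : ∀ ℓ, Tendsto (fun a => ∑ m, (μ a).real (A a m ℓ) ^ 2) f (𝓝 0))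
    (hpair : ∀ ℓ ℓ', ℓ ≠ ℓ' →
      Tendsto (fun a => ∑ m, (μ a).real (A a m ℓ ∩ A a m ℓ')) f (𝓝 0)) (w : L → ℕ) :
    Tendsto (fun a => (μ a).real {ω | ∑ m, occurrences (A a m) ω = w}) f
      (𝓝 (∏ ℓ, lam ℓ ^ w ℓ * Real.exp (-lam ℓ) / ((w ℓ).factorial : ℝ))) := by
  let r (a : α) : L → ℝ≥0 := ∑ m, fun ℓ => (μ a (A a m ℓ)).toNNReal
  have hr (a : α) (ℓ : L) : (r a ℓ : ℝ) = ∑ m, (μ a).real (A a m ℓ) := by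
    simp [r, measureReal_def, ENNReal.toReal]
  have hlimit := tendsto_poissonPi_real_singleton (r := r) (f := f) (lam := lam)
    (fun ℓ => by simpa only [hr] using hmean ℓ) w
  have herror : Tendsto (fun a => (μ a).real {ω | ∑ m, occurrences (A a m) ω = w} -
      (poissonPi (r a)).real {w}) f (𝓝 0) := by
    refine squeeze_zero_norm (fun a => ?_) (tendsto_poissonError hsq hpair)
    have hmeas (m : κ a) := measurable_occurrences (hA a m)
    have hsum : Measurable (∑ m, occurrences (A a m)) := by fun_prop
    have h := tvClose_map_sum_occurrences_poissonPi (hA a) (hind a) univ {w}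
      (measurableSet_singleton w)
    rw [map_measureReal_apply hsum (measurableSet_singleton w)] at h
    simpa [r, Set.preimage] using h
  simpa using herror.add hlimit

end Events

section Independence

variable {Ω ι : Type*} [MeasurableSpace Ω] {μ : Measure Ω}

lemma iIndepFun_of_indepFun_finset [IsProbabilityMeasure μ] {β : ι → Type*}
    [∀ i, MeasurableSpace (β i)] {X : ∀ i, Ω → β i}
    (hX : ∀ (s : Finset ι), ∀ i ∉ s, X i ⟂ᵢ[μ] fun ω (j : s) => X j ω) : iIndepFun X μ := by
  refine iIndepFun_iff_measure_inter_preimage_eq_mul.2 fun s sets hsets => ?_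
  induction s using Finset.induction_on with
  | empty => simp
  | insert i s hi ih =>
    have hsets' : ∀ j ∈ s, MeasurableSet (sets j) := fun j hj => hsets j (mem_insert_of_mem hj)
    have hpi : ⋂ j ∈ s, X j ⁻¹' sets j =
        (fun ω (j : s) => X j ω) ⁻¹' Set.univ.pi fun j => sets j := by
      ext ω; simp
    rw [set_biInter_insert, prod_insert hi, ← ih hsets', hpi]
    exact (hX s i hi).measure_inter_preimage_eq_mul _ _ (hsets i (mem_insert_self i s))
      (.univ_pi fun j => hsets' j j.2)

lemma iIndepFun_fiberwise {κ : Type*} [Finite κ] {β : κ → Type*} [∀ k, MeasurableSpace (β k)]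
    {X : ∀ k, Ω → β k} (hX : iIndepFun X μ) (hmeas : ∀ k, Measurable (X k)) (g : κ → ι) :
    iIndepFun (fun i ω (k : {k // g k = i}) => X k ω) μ := by
  have := Fintype.ofFinite κ
  have := hX.isProbabilityMeasure
  refine iIndepFun_of_indepFun_finset fun s i hi => ?_
  have hdisj : Disjoint (univ.filter fun k => g k = i) (univ.filter fun k => g k ∈ s) :=
    disjoint_filter.2 fun k _ hk hk' => hi (hk ▸ hk')
  exact (hX.indepFun_finset _ _ hdisj hmeas).comp
    (φ := fun y (k : {k // g k = i}) => y ⟨k, by simp [k.2]⟩)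
    (ψ := fun y (j : s) (k : {k // g k = j}) => y ⟨k, by simp [k.2]⟩)
    (measurable_pi_lambda _ fun k => measurable_pi_apply _)
    (measurable_pi_lambda _ fun j => measurable_pi_lambda _ fun k => measurable_pi_apply _)

end Independence

section Array

lemma sum_mul_le_iSup_mul_sum {ι : Type*} (s : Finset ι) (a : ι → ℝ) {b : ι → ℝ}
    (hb : ∀ m ∈ s, 0 ≤ b m) : ∑ m ∈ s, a m * b m ≤ (⨆ m ∈ s, a m) * ∑ m ∈ s, b m := by
  -- For `m ∉ s` the inner supremum is over an empty type and takes the junk value `0`.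
  have hbdd : BddAbove (Set.range fun m => ⨆ _ : m ∈ s, a m) := by
    refine ((s.finite_toSet.image a).insert 0).bddAbove.mono ?_
    rintro _ ⟨m, rfl⟩
    by_cases hm : m ∈ s
    · exact .inr ⟨m, hm, by simp [hm]⟩
    · exact .inl (by simp [hm])
  rw [mul_sum]
  refine sum_le_sum fun m hm => mul_le_mul_of_nonneg_right ?_ (hb m hm)
  simpa [hm] using le_ciSup hbdd m

lemma tendsto_sum_mul_zero_of_tendsto_iSup {α ι : Type*} {f : Filter α} {s : α → Finset ι}
    {a b : α → ι → ℝ} {c : ℝ} (ha : ∀ x, ∀ m ∈ s x, 0 ≤ a x m) (hb : ∀ x, ∀ m ∈ s x, 0 ≤ b x m)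
    (hmax : Tendsto (fun x => ⨆ m ∈ s x, a x m) f (𝓝 0))
    (hsum : Tendsto (fun x => ∑ m ∈ s x, b x m) f (𝓝 c)) :
    Tendsto (fun x => ∑ m ∈ s x, a x m * b x m) f (𝓝 0) :=
  squeeze_zero (fun x => sum_nonneg fun m hm => mul_nonneg (ha x m hm) (hb x m hm))
    (fun x => sum_mul_le_iSup_mul_sum (s x) (a x) (hb x))
    (by simpa only [zero_mul] using hmax.mul hsum)

end Array

section Network

lemma isProbabilityMeasure_bern {x : ℝ} (hx : x ∈ Set.Icc (0 : ℝ) 1) :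
    IsProbabilityMeasure (bern x) := by
  constructor
  simp only [bern, Measure.coe_add, Measure.coe_smul, Pi.add_apply, Pi.smul_apply, measure_univ,
    smul_eq_mul, mul_one]
  rw [← ENNReal.ofReal_add hx.1 (sub_nonneg.2 hx.2), add_sub_cancel, ENNReal.ofReal_one]

lemma pi_bern_real_forall_true {κ : Type*} [Fintype κ] {f : κ → ℝ}
    (hf : ∀ k, f k ∈ Set.Icc (0 : ℝ) 1) (S : Finset κ) :
    (Measure.pi fun k => bern (f k)).real {ω | ∀ k ∈ S, ω k = true} = ∏ k ∈ S, f k := by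
  have := fun k => isProbabilityMeasure_bern (hf k)
  have hset : {ω : κ → Bool | ∀ k ∈ S, ω k = true} = (S : Set κ).pi fun _ => {true} := by
    ext ω; simp
  rw [hset, measureReal_def, Measure.pi_pi_finset, ENNReal.toReal_prod]
  exact prod_congr rfl fun k _ => by simp [bern, (hf k).1]

variable {V : Type} {M : ℕ} {p : ℕ → (V × V) → ℝ} {q : ℕ → V → ℝ}

/-- The success probability of each of the independent Bernoulli coordinates of the network. -/
def coordProb (p : ℕ → (V × V) → ℝ) (q : ℕ → V → ℝ) : (Fin M × (V × V)) ⊕ (Fin M × V) → ℝ :=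
  Sum.elim (fun a => p a.1 a.2) fun a => q a.1 a.2

lemma coordProb_mem_Icc (hp : ∀ m ℓ, p m ℓ ∈ Set.Icc (0 : ℝ) 1)
    (hq : ∀ m i, q m i ∈ Set.Icc (0 : ℝ) 1) (k : (Fin M × (V × V)) ⊕ (Fin M × V)) :
    coordProb p q k ∈ Set.Icc (0 : ℝ) 1 := by
  rcases k with a | a
  · exact hp _ _
  · exact hq _ _

lemma netμ'_eq_pi [Fintype V] : netμ' V M p q = Measure.pi fun k => bern (coordProb p q k) := rfl

/-- The set of outcomes in which link `ℓ` exists on layer `m`. -/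
def linkEvent (m : Fin M) (ℓ : V × V) : Set (((Fin M × (V × V)) ⊕ (Fin M × V)) → Bool) :=
  {ω | exOn m ℓ ω}

/-- The coordinates that determine the presence of link `ℓ` on layer `m`. -/
noncomputable def linkCoords (m : Fin M) (ℓ : V × V) : Finset ((Fin M × (V × V)) ⊕ (Fin M × V)) :=
  {Sum.inl (m, ℓ), Sum.inr (m, ℓ.1), Sum.inr (m, ℓ.2)}

lemma linkEvent_eq_forall_linkCoords (m : Fin M) (ℓ : V × V) :
    linkEvent m ℓ = {ω | ∀ k ∈ linkCoords m ℓ, ω k = true} := by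
  simp [linkEvent, exOn, linkCoords]

lemma Wnum_eq_sum_occurrences (ℓ : V × V) (ω : ((Fin M × (V × V)) ⊕ (Fin M × V)) → Bool) :
    Wnum ℓ ω = ∑ m, occurrences (linkEvent m) ω ℓ := by
  simp [Wnum, occurrences, linkEvent, Set.indicator_apply]

lemma prod_linkCoords (m : Fin M) {ℓ : V × V} (hℓ : ℓ.1 ≠ ℓ.2) :
    ∏ k ∈ linkCoords m ℓ, coordProb p q k = p m ℓ * q m ℓ.1 * q m ℓ.2 := by
  rw [linkCoords, prod_insert (by simp), prod_insert (by simp [hℓ]), prod_singleton]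
  simp [coordProb, mul_assoc]

lemma disjoint_linkCoords (m : Fin M) {ℓ ℓ' : V × V} (h : ¬ shares ℓ ℓ') :
    Disjoint (linkCoords m ℓ) (linkCoords m ℓ') := by
  have hne : ℓ ≠ ℓ' := fun h' => h (.inl (h' ▸ rfl))
  simp only [shares, not_or] at h
  simp [linkCoords, hne, h, Ne.symm, eq_comm]

variable [Fintype V]

lemma netμ'_real_linkEvent (hp : ∀ m ℓ, p m ℓ ∈ Set.Icc (0 : ℝ) 1)
    (hq : ∀ m i, q m i ∈ Set.Icc (0 : ℝ) 1) (m : Fin M) {ℓ : V × V} (hℓ : ℓ.1 ≠ ℓ.2) :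
    (netμ' V M p q).real (linkEvent m ℓ) = p m ℓ * q m ℓ.1 * q m ℓ.2 := by
  rw [netμ'_eq_pi, linkEvent_eq_forall_linkCoords,
    pi_bern_real_forall_true (coordProb_mem_Icc hp hq), prod_linkCoords m hℓ]

lemma netμ'_real_linkEvent_inter (hp : ∀ m ℓ, p m ℓ ∈ Set.Icc (0 : ℝ) 1)
    (hq : ∀ m i, q m i ∈ Set.Icc (0 : ℝ) 1) (m : Fin M) {ℓ ℓ' : V × V} (hsh : ¬ shares ℓ ℓ') :
    (netμ' V M p q).real (linkEvent m ℓ ∩ linkEvent m ℓ') =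
      (netμ' V M p q).real (linkEvent m ℓ) * (netμ' V M p q).real (linkEvent m ℓ') := by
  have hset : linkEvent m ℓ ∩ linkEvent m ℓ' =
      {ω | ∀ k ∈ linkCoords m ℓ ∪ linkCoords m ℓ', ω k = true} := by
    simp only [linkEvent_eq_forall_linkCoords, ← Set.ofPred_and, mem_union, or_imp, forall_and]
  rw [hset, linkEvent_eq_forall_linkCoords, linkEvent_eq_forall_linkCoords]
  simp only [netμ'_eq_pi, pi_bern_real_forall_true (coordProb_mem_Icc hp hq),
    prod_union (disjoint_linkCoords m hsh)]

lemma integral_Wlay_mul (m : Fin M) (ℓ ℓ' : V × V) :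
    ∫ ω, Wlay m ℓ ω * Wlay m ℓ' ω ∂(netμ' V M p q) =
      (netμ' V M p q).real (linkEvent m ℓ ∩ linkEvent m ℓ') := by
  rw [← integral_indicator_one .of_discrete, Set.inter_indicator_one]
  rfl

lemma iIndepFun_occurrences_linkEvent (hp : ∀ m ℓ, p m ℓ ∈ Set.Icc (0 : ℝ) 1)
    (hq : ∀ m i, q m i ∈ Set.Icc (0 : ℝ) 1) {L : Type*} (e : L → V × V) :
    iIndepFun (fun m : Fin M => occurrences fun ℓ => linkEvent m (e ℓ)) (netμ' V M p q) := by
  have := fun k => isProbabilityMeasure_bern (coordProb_mem_Icc (M := M) hp hq k)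
  have hcoord := iIndepFun_pi (X := fun _ => id) (μ := fun k => bern (coordProb (M := M) p q k))
    fun _ => aemeasurable_id
  let layer : (Fin M × (V × V)) ⊕ (Fin M × V) → Fin M := Sum.elim Prod.fst Prod.fst
  have hlayer := iIndepFun_fiberwise hcoord measurable_pi_apply layer
  exact hlayer.comp (fun m => occurrences fun ℓ => {y | y ⟨Sum.inl (m, e ℓ), rfl⟩ = true ∧
    y ⟨Sum.inr (m, (e ℓ).1), rfl⟩ = true ∧ y ⟨Sum.inr (m, (e ℓ).2), rfl⟩ = true})
    fun _ => measurable_occurrences fun _ => .of_discrete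

end Network

theorem stmt14_general {V : Type} [Fintype V] (E : Finset (V × V))
    (hE1 : ∀ ℓ ∈ E, ℓ.1 ≠ ℓ.2)
    (p : ℕ → ℕ → (V × V) → ℝ) (q : ℕ → ℕ → V → ℝ)
    (hp : ∀ M m ℓ, p M m ℓ ∈ Set.Icc (0 : ℝ) 1) (hq : ∀ M m i, q M m i ∈ Set.Icc (0 : ℝ) 1)
    (lam : (V × V) → ℝ)
    (hmax : ∀ ℓ ∈ E,
      Tendsto (fun M : ℕ => ⨆ m ∈ Finset.range M, p M m ℓ * q M m ℓ.1 * q M m ℓ.2)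
        atTop (𝓝 0))
    (hsum : ∀ ℓ ∈ E,
      Tendsto (fun M : ℕ => ∑ m ∈ Finset.range M, p M m ℓ * q M m ℓ.1 * q M m ℓ.2)
        atTop (𝓝 (lam ℓ)))
    (hcorr : ∀ ℓ ∈ E, ∀ ℓ' ∈ E, ℓ ≠ ℓ' → shares ℓ ℓ' →
      Tendsto (fun M : ℕ =>
          ∑ m : Fin M, ∫ ω, Wlay m ℓ ω * Wlay m ℓ' ω ∂(netμ' V M (p M) (q M)))
        atTop (𝓝 0))
    (w : (V × V) → ℕ) :
    Tendsto (fun M : ℕ =>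
        ((netμ' V M (p M) (q M)) {ω | ∀ ℓ ∈ E, Wnum ℓ ω = w ℓ}).toReal) atTop
      (𝓝 (∏ ℓ ∈ E,
        lam ℓ ^ (w ℓ) * Real.exp (-lam ℓ) / ((w ℓ).factorial : ℝ))) := by
  have hnonneg (ℓ : V × V) (M m : ℕ) : 0 ≤ p M m ℓ * q M m ℓ.1 * q M m ℓ.2 :=
    mul_nonneg (mul_nonneg (hp M m ℓ).1 (hq M m ℓ.1).1) (hq M m ℓ.2).1
  have hprod (ℓ ℓ' : E) : Tendsto (fun M => ∑ m : Fin M,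
      (netμ' V M (p M) (q M)).real (linkEvent m ℓ) *
        (netμ' V M (p M) (q M)).real (linkEvent m ℓ')) atTop (𝓝 0) := by
    simp only [netμ'_real_linkEvent (hp _) (hq _) _ (hE1 _ (Subtype.prop _))]
    simpa only [← Fin.sum_univ_eq_sum_range] using tendsto_sum_mul_zero_of_tendsto_iSup
      (fun M m _ => hnonneg ℓ M m) (fun M m _ => hnonneg ℓ' M m) (hmax ℓ ℓ.2) (hsum ℓ' ℓ'.2)
  have hpair (ℓ ℓ' : E) (hne : ℓ ≠ ℓ') : Tendsto (fun M => ∑ m : Fin M,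
      (netμ' V M (p M) (q M)).real (linkEvent m ℓ ∩ linkEvent m ℓ')) atTop (𝓝 0) := by
    by_cases hsh : shares (ℓ : V × V) ℓ'
    · simpa only [integral_Wlay_mul] using
        hcorr ℓ ℓ.2 ℓ' ℓ'.2 (Subtype.coe_ne_coe.2 hne) hsh
    · simpa only [netμ'_real_linkEvent_inter (hp _) (hq _) _ hsh] using hprod ℓ ℓ'
  have hmean (ℓ : E) : Tendsto (fun M => ∑ m : Fin M,
      (netμ' V M (p M) (q M)).real (linkEvent m ℓ)) atTop (𝓝 (lam ℓ)) := by
    simpa only [netμ'_real_linkEvent (hp _) (hq _) _ (hE1 ℓ ℓ.2),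
      ← Fin.sum_univ_eq_sum_range] using hsum ℓ ℓ.2
  have hpoisson := tendsto_measureReal_sum_occurrences_eq
    (A := fun M (m : Fin M) (ℓ : E) => linkEvent m (ℓ : V × V)) (fun _ _ _ => .of_discrete)
    (fun M => iIndepFun_occurrences_linkEvent (hp M) (hq M) _) hmean
    (fun ℓ => by simpa only [sq] using hprod ℓ ℓ) hpair fun ℓ => w ℓ
  rw [← prod_coe_sort E]
  refine hpoisson.congr fun M => ?_
  simp [Wnum_eq_sum_occurrences, measureReal_def, funext_iff, occurrences]

/-- asymptotic independence with Poisson limits for non-identical layers,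
under (i) `max_m r_{m,ℓ} → 0`, (ii) `Σ_m r_{m,ℓ} → λ_ℓ ∈ (0,∞)` and (iii)
`R_{ℓ,ℓ'} = Σ_m E[W_{m,ℓ} W_{m,ℓ'}] → 0` for distinct links sharing an endpoint. -/
theorem stmt14 {V : Type} [Fintype V] [DecidableEq V] (E : Finset (V × V))
    (hE1 : ∀ ℓ ∈ E, ℓ.1 ≠ ℓ.2) (hE2 : ∀ ℓ ∈ E, (ℓ.2, ℓ.1) ∉ E)
    (p : ℕ → ℕ → (V × V) → ℝ) (q : ℕ → ℕ → V → ℝ)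
    (hp : ∀ M m ℓ, p M m ℓ ∈ Set.Ioc (0 : ℝ) 1) (hq : ∀ M m i, q M m i ∈ Set.Ioc (0 : ℝ) 1)
    (lam : (V × V) → ℝ) (hlam : ∀ ℓ ∈ E, 0 < lam ℓ)
    (hmax : ∀ ℓ ∈ E,
      Tendsto (fun M : ℕ => ⨆ m ∈ Finset.range M, p M m ℓ * q M m ℓ.1 * q M m ℓ.2)
        atTop (nhds 0))
    (hsum : ∀ ℓ ∈ E,
      Tendsto (fun M : ℕ => ∑ m ∈ Finset.range M, p M m ℓ * q M m ℓ.1 * q M m ℓ.2)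
        atTop (nhds (lam ℓ)))
    (hcorr : ∀ ℓ ∈ E, ∀ ℓ' ∈ E, ℓ ≠ ℓ' → shares ℓ ℓ' →
      Tendsto (fun M : ℕ =>
          ∑ m : Fin M, ∫ ω, Wlay m ℓ ω * Wlay m ℓ' ω ∂(netμ' V M (p M) (q M)))
        atTop (nhds 0))
    (w : (V × V) → ℕ) :
    Tendsto (fun M : ℕ =>
        ((netμ' V M (p M) (q M)) {ω | ∀ ℓ ∈ E, Wnum ℓ ω = w ℓ}).toReal) atTop
      (nhds (∏ ℓ ∈ E,
        lam ℓ ^ (w ℓ) * Real.exp (-lam ℓ) / ((w ℓ).factorial : ℝ))) :=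
  stmt14_general E hE1 p q (fun M m ℓ => Set.Ioc_subset_Icc_self (hp M m ℓ))
    (fun M m i => Set.Ioc_subset_Icc_self (hq M m i)) lam hmax hsum hcorr w
end

section
/- Consider the M-layer model on the three-node line graph with nodes 1, 2, 3 and links ℓ₁ = (1,2), ℓ₂ = (2,3), with thinning probabilities p_{ℓ₁}, p_{ℓ₂} ∈ (0,1] and node activation probabilities q₁, q₂, q₃ ∈ (0,1]. Then the probability that neither link exists on any layer satisfies P[W_{ℓ₁} = 0 and W_{ℓ₂} = 0] = [1 − q₂ + q₂ (1 − q₁ p_{ℓ₁})(1 − q₃ p_{ℓ₂})]^M. -/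
open MeasureTheory Filter Finset

open scoped Classical

/-- The `M`-layer model: mutually independent Bernoulli variables `Y_{m,ℓ}` (link
thinning, probability `p ℓ`) and `Z_{m,i}` (node activation, probability `q i`). -/
noncomputable def netμ (V : Type) [Fintype V] (M : ℕ) (p : V × V → ℝ) (q : V → ℝ) :
    Measure (((Fin M × (V × V)) ⊕ (Fin M × V)) → Bool) :=
  Measure.pi fun k =>
    bern (Sum.elim (fun a : Fin M × (V × V) => p a.2) (fun a : Fin M × V => q a.2) k)

/-!
The layers of the model are independent and identically distributed, so an event that imposes the
same condition on every layer has as its probability the `M`-th power of its single-layer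
probability. Within one layer, a link exists exactly when its own coordinate and those of its two
endpoints equal `1`, and inclusion–exclusion gives the probability that neither of two links exists.
Two links that share the node `j` share only the coordinate of `j`, so the intersection term carries
`q j` once rather than squared.
-/

section ProductBernoulli

lemma isProbabilityMeasure_bern_s15 {r : ℝ} (hr : r ∈ Set.Icc (0 : ℝ) 1) :
    IsProbabilityMeasure (bern r) where
  measure_univ := by
    simp [bern, ← ENNReal.ofReal_add hr.1 (sub_nonneg.2 hr.2)]

instance isFiniteMeasure_bern (r : ℝ) : IsFiniteMeasure (bern r) where
  measure_univ_lt_top := by simp [bern]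

lemma bern_real_singleton_true {r : ℝ} (hr : 0 ≤ r) : (bern r).real {true} = r := by
  simp [bern, measureReal_def, hr]

variable {ι : Type*} [Fintype ι] {r : ι → ℝ}

lemma pi_bern_real_forall_mem_eq_true (hr : ∀ k, r k ∈ Set.Icc (0 : ℝ) 1) (T : Finset ι) :
    (Measure.pi fun k => bern (r k)).real {ω | ∀ k ∈ T, ω k = true} = ∏ k ∈ T, r k := by
  have := fun k => isProbabilityMeasure_bern_s15 (hr k)
  calc (Measure.pi fun k => bern (r k)).real {ω | ∀ k ∈ T, ω k = true}
      = ∏ k ∈ T, (bern (r k)).real {true} := by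
        simp only [measureReal_def, ← ENNReal.toReal_prod]
        exact congrArg ENNReal.toReal (Measure.pi_pi_finset _ (fun _ => {true}) T)
    _ = ∏ k ∈ T, r k := prod_congr rfl fun k _ => bern_real_singleton_true (hr k).1

lemma pi_bern_real_not_forall_and_not_forall [DecidableEq ι]
    (hr : ∀ k, r k ∈ Set.Icc (0 : ℝ) 1) (S T : Finset ι) :
    (Measure.pi fun k => bern (r k)).real
        {ω | (¬ ∀ k ∈ S, ω k = true) ∧ ¬ ∀ k ∈ T, ω k = true} =
      1 - ∏ k ∈ S, r k - ∏ k ∈ T, r k + ∏ k ∈ S ∪ T, r k := by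
  have := fun k => isProbabilityMeasure_bern_s15 (hr k)
  set μ := Measure.pi fun k => bern (r k)
  let cyl (U : Finset ι) : Set (ι → Bool) := {ω | ∀ k ∈ U, ω k = true}
  have measurableSet_cyl (U : Finset ι) : MeasurableSet (cyl U) := (cyl U).toFinite.measurableSet
  have cyl_inter : cyl S ∩ cyl T = cyl (S ∪ T) := by
    ext ω
    exact forall_mem_union.symm
  have union_add_inter := measureReal_union_add_inter (μ := μ) (s := cyl S) (measurableSet_cyl T)
  have compl_union := probReal_compl_eq_one_sub (μ := μ)
    ((measurableSet_cyl S).union (measurableSet_cyl T))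
  rw [Set.compl_union] at compl_union
  simp only [cyl_inter, cyl, μ, pi_bern_real_forall_mem_eq_true hr] at union_add_inter
  change μ.real ((cyl S)ᶜ ∩ (cyl T)ᶜ) = _
  linarith

end ProductBernoulli

section Layers

variable {V : Type} {M : ℕ}

/-- The configuration on layer `m`, a Boolean function of the links and the nodes. -/
def layer (m : Fin M) (ω : ((Fin M × (V × V)) ⊕ (Fin M × V)) → Bool) : (V × V) ⊕ V → Bool :=
  ω ∘ Sum.map (Prod.mk m) (Prod.mk m)

/-- The law of a single layer of the model. -/
noncomputable def layerLaw [Fintype V] (p : V × V → ℝ) (q : V → ℝ) :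
    Measure ((V × V) ⊕ V → Bool) :=
  Measure.pi fun k => bern (Sum.elim p q k)

/-- The coordinates of a layer that decide whether the link `ℓ` exists on it: those of `ℓ` itself
and of its two endpoints. -/
noncomputable def linkSupport (ℓ : V × V) : Finset ((V × V) ⊕ V) :=
  {Sum.inl ℓ, Sum.inr ℓ.1, Sum.inr ℓ.2}

lemma exOn_iff_forall_mem_linkSupport (m : Fin M) (ℓ : V × V)
    (ω : ((Fin M × (V × V)) ⊕ (Fin M × V)) → Bool) :
    exOn m ℓ ω ↔ ∀ k ∈ linkSupport ℓ, layer m ω k = true := by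
  simp [exOn, linkSupport, layer]

lemma Wnum_eq_zero_iff (ℓ : V × V) (ω : ((Fin M × (V × V)) ⊕ (Fin M × V)) → Bool) :
    Wnum ℓ ω = 0 ↔ ∀ m : Fin M, ¬ exOn m ℓ ω := by
  simp [Wnum, filter_eq_empty_iff]

lemma prod_linkSupport (p : V × V → ℝ) (q : V → ℝ) {i j : V} (hij : i ≠ j) :
    ∏ k ∈ linkSupport (i, j), Sum.elim p q k = p (i, j) * q i * q j := by
  simp [linkSupport, hij, mul_assoc]

lemma prod_linkSupport_union_linkSupport (p : V × V → ℝ) (q : V → ℝ) {i j k : V}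
    (hij : i ≠ j) (hjk : j ≠ k) (hik : i ≠ k) :
    ∏ a ∈ linkSupport (i, j) ∪ linkSupport (j, k), Sum.elim p q a =
      p (i, j) * p (j, k) * q i * q j * q k := by
  have union_eq : linkSupport (i, j) ∪ linkSupport (j, k) =
      {.inl (i, j), .inl (j, k), .inr i, .inr j, .inr k} := by
    ext a
    simp only [linkSupport, mem_union, mem_insert, mem_singleton]
    tauto
  simp [union_eq, hij, hjk, hik, mul_assoc]

variable [Fintype V]

lemma measurePreserving_layer (p : V × V → ℝ) (q : V → ℝ) :
    MeasurePreserving (fun ω m => layer m ω) (netμ V M p q)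
      (Measure.pi fun _ : Fin M => layerLaw p q) := by
  refine ⟨.of_discrete, Measure.ext_of_singleton fun η => ?_⟩
  have preimage_singleton : (fun ω m => layer m ω) ⁻¹' {η} =
      {Sum.elim (fun a => η a.1 (.inl a.2)) fun a => η a.1 (.inr a.2)} := by
    ext ω
    simp [layer, funext_iff, Sum.forall, Prod.forall, forall_and]
  rw [Measure.map_apply .of_discrete (measurableSet_singleton η), preimage_singleton]
  simp [netμ, layerLaw, Measure.pi_singleton, Fintype.prod_sum_type, Fintype.prod_prod_type,
    prod_mul_distrib]

lemma netμ_real_forall_layer_mem (p : V × V → ℝ) (q : V → ℝ) (A : Set ((V × V) ⊕ V → Bool)) :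
    (netμ V M p q).real {ω | ∀ m, layer m ω ∈ A} = (layerLaw p q).real A ^ M := by
  have : IsFiniteMeasure (layerLaw p q) := by unfold layerLaw; infer_instance
  calc (netμ V M p q).real {ω | ∀ m, layer m ω ∈ A}
      = (netμ V M p q).real ((fun ω m => layer m ω) ⁻¹' Set.univ.pi fun _ => A) := by
        simp [Set.preimage, Set.mem_pi]
    _ = (Measure.pi fun _ : Fin M => layerLaw p q).real (Set.univ.pi fun _ => A) :=
        (measurePreserving_layer p q).measureReal_preimage
          (Set.toFinite _).measurableSet.nullMeasurableSet
    _ = (layerLaw p q).real A ^ M := by simp [measureReal_def, Measure.pi_pi]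

lemma netμ_real_Wnum_eq_zero_and_Wnum_eq_zero {p : V × V → ℝ} {q : V → ℝ}
    (hp : ∀ ℓ, p ℓ ∈ Set.Icc (0 : ℝ) 1) (hq : ∀ i, q i ∈ Set.Icc (0 : ℝ) 1) (ℓ ℓ' : V × V) :
    (netμ V M p q).real {ω | Wnum ℓ ω = 0 ∧ Wnum ℓ' ω = 0} =
      (1 - ∏ k ∈ linkSupport ℓ, Sum.elim p q k - ∏ k ∈ linkSupport ℓ', Sum.elim p q k
        + ∏ k ∈ linkSupport ℓ ∪ linkSupport ℓ', Sum.elim p q k) ^ M := by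
  have hr : ∀ k, Sum.elim p q k ∈ Set.Icc (0 : ℝ) 1 := Sum.forall.2 ⟨hp, hq⟩
  rw [← pi_bern_real_not_forall_and_not_forall hr, ← layerLaw, ← netμ_real_forall_layer_mem]
  simp only [Wnum_eq_zero_iff, exOn_iff_forall_mem_linkSupport, ← forall_and, Set.mem_ofPred_eq]

end Layers

theorem stmt15_general {V : Type} [Fintype V] (M : ℕ) {p : V × V → ℝ} {q : V → ℝ}
    (hp : ∀ ℓ, p ℓ ∈ Set.Icc (0 : ℝ) 1) (hq : ∀ i, q i ∈ Set.Icc (0 : ℝ) 1) {i j k : V}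
    (hij : i ≠ j) (hjk : j ≠ k) (hik : i ≠ k) :
    (netμ V M p q).real {ω | Wnum (i, j) ω = 0 ∧ Wnum (j, k) ω = 0} =
      (1 - q j + q j * (1 - q i * p (i, j)) * (1 - q k * p (j, k))) ^ M := by
  rw [netμ_real_Wnum_eq_zero_and_Wnum_eq_zero hp hq, prod_linkSupport p q hij,
    prod_linkSupport p q hjk, prod_linkSupport_union_linkSupport p q hij hjk hik]
  ring

/-- for the three-node line with links `ℓ₁ = (1,2)` and `ℓ₂ = (2,3)`,
`P[W_{ℓ₁} = 0 ∧ W_{ℓ₂} = 0] = [1 − q₂ + q₂ (1 − q₁ p₁)(1 − q₃ p₂)]^M`. -/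
theorem stmt15 (M : ℕ) (hM : 1 ≤ M) (p1 p2 q1 q2 q3 : ℝ)
    (hp1 : p1 ∈ Set.Ioc (0 : ℝ) 1) (hp2 : p2 ∈ Set.Ioc (0 : ℝ) 1)
    (hq1 : q1 ∈ Set.Ioc (0 : ℝ) 1) (hq2 : q2 ∈ Set.Ioc (0 : ℝ) 1)
    (hq3 : q3 ∈ Set.Ioc (0 : ℝ) 1) :
    ((netμ (Fin 3) M
        (fun ℓ => if ℓ = ((0 : Fin 3), (1 : Fin 3)) then p1
          else if ℓ = ((1 : Fin 3), (2 : Fin 3)) then p2 else 1)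
        ![q1, q2, q3])
      {ω | Wnum ((0 : Fin 3), (1 : Fin 3)) ω = 0 ∧
           Wnum ((1 : Fin 3), (2 : Fin 3)) ω = 0}).toReal
      = (1 - q2 + q2 * (1 - q1 * p1) * (1 - q3 * p2)) ^ M := by
  have hp (ℓ : Fin 3 × Fin 3) :
      (if ℓ = (0, 1) then p1 else if ℓ = (1, 2) then p2 else 1) ∈ Set.Icc (0 : ℝ) 1 := by
    split_ifs <;> simp [hp1.1.le, hp1.2, hp2.1.le, hp2.2]
  have hq : ∀ i, ![q1, q2, q3] i ∈ Set.Icc (0 : ℝ) 1 := by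
    simp [Fin.forall_fin_succ, hq1.1.le, hq1.2, hq2.1.le, hq2.2, hq3.1.le, hq3.2]
  simpa [measureReal_def] using stmt15_general (i := 0) (j := 1) (k := 2) M hp hq
    (by decide) (by decide) (by decide)
end
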